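/- (Proposition 4.5.) Let F be the logistic function, θ ∈ ℝ, δ_1,…,δ_k ∈ ℝ. Let μ be a probability measure on {0,1}^k concentrated on the Guttman space Ω^G, assigning positive probability to every Guttman vector, and suppose its coordinate projections Y^{(1)},…,Y^{(k)} satisfy μ(Y^{(r)} = 1 | Y^{(r−1)} = 1, Y^{(r+1)} = 0) = F(θ − δ_r) for all r = 1,…,k, with the conventions Y^{(0)} ≡ 1 and Y^{(k+1)} ≡ 0. Then the sum Y = Y^{(1)} + … + Y^{(k)} follows the partial credit model with parameters θ, δ_1,…,δ_k. -/

import Mathlib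

open scoped Classical

/-- The logistic function `F(x) = exp x / (1 + exp x)`. -/
noncomputable def logistic (x : ℝ) : ℝ := Real.exp x / (1 + Real.exp x)

/-- A vector in `{0,1}^k` is a Guttman vector if its coordinates are nonincreasing,
i.e. it has the form `(1,…,1,0,…,0)`. -/
def IsGuttman {k : ℕ} (y : Fin k → Bool) : Prop :=
  ∀ i j : Fin k, i ≤ j → y j = true → y i = true

/-- The sum `Y = Y⁽¹⁾ + … + Y⁽ᵏ⁾` of the binary coordinates. -/
def gsum {k : ℕ} (y : Fin k → Bool) : ℕ :=
  ∑ i : Fin k, if y i then 1 else 0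

/-- The `r`-th coordinate `Y⁽ʳ⁾` of `y ∈ {0,1}^k` (for `1 ≤ r ≤ k`), with the
conventions `Y⁽⁰⁾ ≡ 1` and `Y⁽ʳ⁾ ≡ 0` for `r > k`. -/
def coordExt {k : ℕ} (y : Fin k → Bool) (r : ℕ) : Bool :=
  if h0 : r = 0 then true
  else if h : r ≤ k then y ⟨r - 1, by omega⟩ else false

/-- The probability mass function of the partial credit model (PCM) with person
parameter `θ` and item parameters `δ 1, …, δ k`. -/
noncomputable def pcmPMF (k : ℕ) (θ : ℝ) (δ : ℕ → ℝ) (r : ℕ) : ℝ :=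
  Real.exp (∑ l ∈ Finset.Icc 1 r, (θ - δ l)) /
    ∑ s ∈ Finset.range (k + 1), Real.exp (∑ l ∈ Finset.Icc 1 s, (θ - δ l))

/-!
On the Guttman space `Y⁽ʳ⁾ = 1` holds exactly when `r ≤ Y`, so conditioning on `Y⁽ʳ⁻¹⁾ = 1` and
`Y⁽ʳ⁺¹⁾ = 0` amounts to conditioning on `Y ∈ {r - 1, r}`. The hypothesis therefore prescribes the
odds `exp (θ - δ r)` of `Y = r` against `Y = r - 1`; multiplying these odds and normalising yields
the partial credit model.
-/

section Logistic

lemma logistic_pos (x : ℝ) : 0 < logistic x := by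
  unfold logistic
  positivity

lemma eq_mul_exp_of_div_add_eq_logistic {a b x : ℝ} (h : b / (a + b) = logistic x) :
    b = a * Real.exp x := by
  -- A zero denominator would make the left-hand side of `h` the junk value `0`.
  have hden : a + b ≠ 0 := fun h0 => (logistic_pos x).ne (by rw [← h, h0, div_zero])
  rw [logistic, div_eq_div_iff hden (by positivity)] at h
  linarith

end Logistic

section PartialCreditModel

variable {k : ℕ} {θ : ℝ} {δ p : ℕ → ℝ}

lemma eq_mul_exp_sum_of_succ_eq_mul_exp {f : ℕ → ℝ}
    (hp : ∀ r < k, p (r + 1) = p r * Real.exp (f (r + 1))) {r : ℕ} (hr : r ≤ k) :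
    p r = p 0 * Real.exp (∑ l ∈ Finset.Icc 1 r, f l) := by
  induction r with
  | zero => simp
  | succ n ih =>
    rw [hp n hr, ih (by lia), Finset.sum_Icc_succ_top (by lia), Real.exp_add, mul_assoc]

lemma eq_sum_mul_pcmPMF_of_succ_eq_mul_exp
    (hp : ∀ r < k, p (r + 1) = p r * Real.exp (θ - δ (r + 1))) {r : ℕ} (hr : r ≤ k) :
    p r = (∑ s ∈ Finset.range (k + 1), p s) * pcmPMF k θ δ r := by
  set Z := ∑ s ∈ Finset.range (k + 1), Real.exp (∑ l ∈ Finset.Icc 1 s, (θ - δ l)) with hZ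
  have hform : ∀ s ≤ k, p s = p 0 * Real.exp (∑ l ∈ Finset.Icc 1 s, (θ - δ l)) := fun s hs =>
    eq_mul_exp_sum_of_succ_eq_mul_exp (f := fun l => θ - δ l) hp hs
  have hZpos : 0 < Z := Finset.sum_pos (fun _ _ => Real.exp_pos _) Finset.nonempty_range_add_one
  have hsum : ∑ s ∈ Finset.range (k + 1), p s = p 0 * Z := by
    rw [hZ, Finset.mul_sum]
    exact Finset.sum_congr rfl fun s hs => hform s (Finset.mem_range_succ_iff.mp hs)
  rw [hsum, pcmPMF, ← hZ, hform r hr, mul_assoc, mul_div_cancel₀ _ hZpos.ne']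

end PartialCreditModel

section GuttmanSpace

variable {k : ℕ} {y : Fin k → Bool}

lemma gsum_eq_card_filter (y : Fin k → Bool) :
    gsum y = (Finset.univ.filter fun i => y i = true).card :=
  (Finset.card_filter _ _).symm

lemma gsum_le (y : Fin k → Bool) : gsum y ≤ k := by
  simpa [gsum_eq_card_filter] using Finset.card_filter_le Finset.univ fun i => y i = true

lemma IsGuttman.lt_gsum_iff (hy : IsGuttman y) (i : Fin k) : (i : ℕ) < gsum y ↔ y i = true := by
  rw [gsum_eq_card_filter]
  constructor
  · contrapose!
    intro hi
    have hsub : (Finset.univ.filter fun j => y j = true) ⊆ Finset.Iio i := fun j hj =>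
      Finset.mem_Iio.mpr <| lt_of_not_ge fun hij => hi (hy i j hij (Finset.mem_filter.mp hj).2)
    simpa using Finset.card_le_card hsub
  · intro hi
    have hsub : Finset.Iic i ⊆ Finset.univ.filter fun j => y j = true := fun j hj =>
      Finset.mem_filter.mpr ⟨Finset.mem_univ j, hy j i (Finset.mem_Iic.mp hj) hi⟩
    simpa using Finset.card_le_card hsub

lemma IsGuttman.coordExt_eq_true_iff (hy : IsGuttman y) (r : ℕ) :
    coordExt y r = true ↔ r ≤ gsum y := by
  have hle := gsum_le y
  unfold coordExt
  split_ifs with h0 hr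
  · simp [h0]
  · rw [← hy.lt_gsum_iff]
    dsimp only
    lia
  · simp only [false_iff]
    lia

lemma IsGuttman.coordExt_eq_false_iff (hy : IsGuttman y) (r : ℕ) :
    coordExt y r = false ↔ gsum y < r := by
  rw [← Bool.not_eq_true, hy.coordExt_eq_true_iff, not_le]

end GuttmanSpace

lemma sum_filter_congr_of_ne_zero {ι M : Type*} [AddCommMonoid M] {s : Finset ι} {f : ι → M}
    {P Q : ι → Prop} [DecidablePred P] [DecidablePred Q]
    (hPQ : ∀ i ∈ s, f i ≠ 0 → (P i ↔ Q i)) :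
    ∑ i ∈ s.filter P, f i = ∑ i ∈ s.filter Q, f i := by
  rw [Finset.sum_filter, Finset.sum_filter]
  refine Finset.sum_congr rfl fun i hi => ?_
  by_cases hfi : f i = 0
  · simp only [hfi, ite_self]
  · simp only [hPQ i hi hfi]

section ScoreMass

variable {k : ℕ} {M : Type*} [AddCommMonoid M] {μ : (Fin k → Bool) → M}

/-- The mass that `μ` gives to the event `Y = r`, where `Y` is the sum of the coordinates: the
(unnormalised) probability mass function of `Y`. -/
def scoreMass (μ : (Fin k → Bool) → M) (r : ℕ) : M :=
  ∑ y ∈ Finset.univ.filter (fun y => gsum y = r), μ y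

lemma sum_scoreMass (μ : (Fin k → Bool) → M) :
    ∑ r ∈ Finset.range (k + 1), scoreMass μ r = ∑ y, μ y :=
  Finset.sum_fiberwise_of_maps_to (fun y _ => Finset.mem_range_succ_iff.mpr (gsum_le y)) μ

lemma sum_filter_coordExt_eq_scoreMass_succ (hconc : ∀ y, ¬ IsGuttman y → μ y = 0) (r : ℕ) :
    ∑ y ∈ Finset.univ.filter (fun y : Fin k → Bool =>
        coordExt y (r + 1) = true ∧ coordExt y r = true ∧ coordExt y (r + 2) = false), μ y
      = scoreMass μ (r + 1) := by
  refine sum_filter_congr_of_ne_zero fun y _ hμy => ?_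
  have hy : IsGuttman y := not_imp_comm.mp (hconc y) hμy
  rw [hy.coordExt_eq_true_iff, hy.coordExt_eq_true_iff, hy.coordExt_eq_false_iff]
  lia

lemma sum_filter_coordExt_eq_scoreMass_add (hconc : ∀ y, ¬ IsGuttman y → μ y = 0) (r : ℕ) :
    ∑ y ∈ Finset.univ.filter (fun y : Fin k → Bool =>
        coordExt y r = true ∧ coordExt y (r + 2) = false), μ y
      = scoreMass μ r + scoreMass μ (r + 1) := by
  have hdisj : Disjoint (Finset.univ.filter fun y : Fin k → Bool => gsum y = r)
      (Finset.univ.filter fun y => gsum y = r + 1) :=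
    Finset.disjoint_filter.mpr fun y _ h => by lia
  rw [scoreMass, scoreMass, ← Finset.sum_union hdisj, ← Finset.filter_or]
  refine sum_filter_congr_of_ne_zero fun y _ hμy => ?_
  have hy : IsGuttman y := not_imp_comm.mp (hconc y) hμy
  rw [hy.coordExt_eq_true_iff, hy.coordExt_eq_false_iff]
  lia

end ScoreMass

theorem pcm_from_guttman_conditional_rasch_general
    (k : ℕ) (θ : ℝ) (δ : ℕ → ℝ) (μ : (Fin k → Bool) → ℝ)
    (hconc : ∀ y, ¬ IsGuttman y → μ y = 0)
    (hrasch : ∀ r ∈ Finset.Icc 1 k,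
      (∑ y ∈ Finset.univ.filter
          (fun y : Fin k → Bool =>
            coordExt y r = true ∧ coordExt y (r - 1) = true ∧ coordExt y (r + 1) = false),
          μ y) /
        (∑ y ∈ Finset.univ.filter
          (fun y : Fin k → Bool =>
            coordExt y (r - 1) = true ∧ coordExt y (r + 1) = false), μ y)
        = logistic (θ - δ r)) :
    ∀ r ≤ k,
      (∑ y ∈ Finset.univ.filter (fun y : Fin k → Bool => gsum y = r), μ y)
        = (∑ y, μ y) * pcmPMF k θ δ r := by
  have hodds : ∀ r < k, scoreMass μ (r + 1) = scoreMass μ r * Real.exp (θ - δ (r + 1)) := by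
    intro r hr
    have h := hrasch (r + 1) (Finset.mem_Icc.mpr ⟨by lia, hr⟩)
    rw [Nat.add_sub_cancel, sum_filter_coordExt_eq_scoreMass_succ hconc,
      sum_filter_coordExt_eq_scoreMass_add hconc] at h
    exact eq_mul_exp_of_div_add_eq_logistic h
  intro r hr
  rw [← sum_scoreMass μ]
  exact eq_sum_mul_pcmPMF_of_succ_eq_mul_exp hodds hr

/-- Proposition 4.5: if a probability measure `μ` on `{0,1}^k` is
concentrated on the Guttman space, gives positive probability to every Guttman
vector, and satisfies `μ(Y⁽ʳ⁾ = 1 | Y⁽ʳ⁻¹⁾ = 1, Y⁽ʳ⁺¹⁾ = 0) = F(θ - δ r)` for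
`r = 1,…,k` (conventions `Y⁽⁰⁾ ≡ 1`, `Y⁽ᵏ⁺¹⁾ ≡ 0`), then the sum `Y` follows the
partial credit model with parameters `θ, δ 1, …, δ k`. -/
theorem pcm_from_guttman_conditional_rasch
    (k : ℕ) (θ : ℝ) (δ : ℕ → ℝ) (μ : (Fin k → Bool) → ℝ)
    (hnn : ∀ y, 0 ≤ μ y) (hsum : ∑ y, μ y = 1)
    (hconc : ∀ y, ¬ IsGuttman y → μ y = 0)
    (hpos : ∀ y, IsGuttman y → 0 < μ y)
    (hrasch : ∀ r ∈ Finset.Icc 1 k,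
      (∑ y ∈ Finset.univ.filter
          (fun y : Fin k → Bool =>
            coordExt y r = true ∧ coordExt y (r - 1) = true ∧ coordExt y (r + 1) = false),
          μ y) /
        (∑ y ∈ Finset.univ.filter
          (fun y : Fin k → Bool =>
            coordExt y (r - 1) = true ∧ coordExt y (r + 1) = false), μ y)
        = logistic (θ - δ r)) :
    ∀ r ≤ k,
      (∑ y ∈ Finset.univ.filter (fun y : Fin k → Bool => gsum y = r), μ y)
        = pcmPMF k θ δ r := by
  simpa only [hsum, one_mul] using
    pcm_from_guttman_conditional_rasch_general k θ δ μ hconc hrasch
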